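/- Rank-3 criterion for quintics: let f = α₀x⁵ + 5α₁x⁴y + 10α₂x³y² + 10α₃x²y³ + 5α₄xy⁴ + α₅y⁵ be a real binary quintic with distinct roots (squarefree over ℂ), whose 3×4 Hankel matrix [[α₀,α₁,α₂,α₃],[α₁,α₂,α₃,α₄],[α₂,α₃,α₄,α₅]] has rank 3, and let g(t) = M₀t³ − M₁t² + M₂t − M₃ where M₀ = det[[α₁,α₂,α₃],[α₂,α₃,α₄],[α₃,α₄,α₅]], M₁ = det[[α₀,α₂,α₃],[α₁,α₃,α₄],[α₂,α₄,α₅]], M₂ = det[[α₀,α₁,α₃],[α₁,α₂,α₄],[α₂,α₃,α₅]], M₃ = det[[α₀,α₁,α₂],[α₁,α₂,α₃],[α₂,α₃,α₄]]. If g has three distinct real roots (as a polynomial of degree 3), then the real rank of f is 3. -/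

import Mathlib

open MvPolynomial

noncomputable section

/-- The real linear binary form `a·x + b·y`. -/
def lin (a b : ℝ) : MvPolynomial (Fin 2) ℝ := C a * X 0 + C b * X 1

/-- `f` is a sum of `r` terms `cⱼ · ℓⱼ^d` with `ℓⱼ` nonzero real linear forms. -/
def HasDecomp (f : MvPolynomial (Fin 2) ℝ) (d r : ℕ) : Prop :=
  ∃ c a b : Fin r → ℝ, (∀ j, (a j, b j) ≠ (0, 0)) ∧
    f = ∑ j, C (c j) * lin (a j) (b j) ^ d

/-- The real (symmetric) rank of a binary form of degree `d`:
the least number of `d`-th powers of real linear forms needed to write `f`. -/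
def realRank (f : MvPolynomial (Fin 2) ℝ) (d : ℕ) : ℕ :=
  sInf {r | HasDecomp f d r}

/-- The set of real projective roots of a binary form. -/
def projRoots (f : MvPolynomial (Fin 2) ℝ) : Set (Projectivization ℝ (Fin 2 → ℝ)) :=
  {p | eval p.rep f = 0}

/-- `f` is a product of `d` pairwise non-proportional real linear forms,
i.e. `f` has `d` distinct real roots. -/
def SplitsDistinct (f : MvPolynomial (Fin 2) ℝ) (d : ℕ) : Prop :=
  ∃ a b : Fin d → ℝ, (∀ j, (a j, b j) ≠ (0, 0)) ∧
    (∀ i j, i ≠ j → a i * b j ≠ a j * b i) ∧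
    f = ∏ j, lin (a j) (b j)

/-- `f` has distinct roots, i.e. it is squarefree as a complex polynomial. -/
def SquarefreeC (f : MvPolynomial (Fin 2) ℝ) : Prop :=
  Squarefree (MvPolynomial.map (algebraMap ℝ ℂ) f)

/-- The linear change of variables of `f` by the matrix `A`: `f(A(x,y))`. -/
def subst (A : Matrix (Fin 2) (Fin 2) ℝ) (f : MvPolynomial (Fin 2) ℝ) :
    MvPolynomial (Fin 2) ℝ :=
  aeval (fun i => C (A i 0) * X 0 + C (A i 1) * X 1) f

/-- The complex rank of a real binary form of degree `d`. -/
def complexRank (f : MvPolynomial (Fin 2) ℝ) (d : ℕ) : ℕ :=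
  sInf {r | ∃ a b : Fin r → ℂ, (∀ j, (a j, b j) ≠ (0, 0)) ∧
    MvPolynomial.map (algebraMap ℝ ℂ) f = ∑ j, (C (a j) * X 0 + C (b j) * X 1) ^ d}

/-!
Write the form as `∑ i, (d choose i) * s i * x ^ (d - i) * y ^ i` with `d = m + r`. A decomposition
`∑ j, c j * (a j * x + b j * y) ^ d` means `s i = ∑ j, c j * a j ^ (d - i) * b j ^ i`, which
factors every Hankel matrix of `s` through a space whose dimension is the number of terms: this
bounds the rank from below. Conversely, a vector `v` in the kernel of the `(m + 1) × (r + 1)` Hankel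
matrix is a linear recurrence for `s` with characteristic polynomial `∑ k, v k * t ^ (r - k)`. If
that polynomial has degree `r` and `r` distinct real roots `t j`, then `s` is a combination of the
geometric sequences `i ↦ t j ^ (d - i)`, so `r` terms suffice. When there is one more column than
rows, the signed maximal minors form such a kernel vector.
-/

open scoped Matrix

section Hankel

/-- The `m × n` Hankel matrix of the sequence `s`; it is the catalecticant of the binary form with
coefficient sequence `s`. -/
def hankel {R : Type*} (s : ℕ → R) (m n : ℕ) : Matrix (Fin m) (Fin n) R :=
  Matrix.of fun i j => s (i + j)

theorem rank_hankel_sum_mul_pow_le {R : Type*} [CommSemiring R] [StrongRankCondition R] {r : ℕ}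
    (m n : ℕ) (c a b : Fin r → R) :
    (hankel (fun i => ∑ j, c j * (a j ^ (m + n - i) * b j ^ i)) (m + 1) (n + 1)).rank ≤ r := by
  let A : Matrix (Fin (m + 1)) (Fin r) R :=
    Matrix.of fun i j => c j * (a j ^ (m - i) * b j ^ (i : ℕ))
  let B : Matrix (Fin r) (Fin (n + 1)) R := Matrix.of fun j k => a j ^ (n - k) * b j ^ (k : ℕ)
  have factorization :
      hankel (fun i => ∑ j, c j * (a j ^ (m + n - i) * b j ^ i)) (m + 1) (n + 1) = A * B := by
    ext i k
    simp only [hankel, A, B, Matrix.mul_apply, Matrix.of_apply]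
    refine Finset.sum_congr rfl fun j _ => ?_
    rw [show m + n - (i + k : ℕ) = (m - i) + (n - k) by omega]
    ring
  rw [factorization]
  exact (Matrix.rank_mul_le_left A B).trans (Matrix.rank_le_width A)

theorem hankel_sum_mul_pow_mulVec_eq_zero {R : Type*} [CommSemiring R] {m r n : ℕ}
    {v : Fin (r + 1) → R} {t : Fin n → R} (ht : ∀ j, ∑ k, v k * t j ^ (r - k : ℕ) = 0)
    (c : Fin n → R) :
    hankel (fun i => ∑ j, c j * t j ^ (m + r - i)) (m + 1) (r + 1) *ᵥ v = 0 := by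
  ext i
  calc ∑ k : Fin (r + 1), (∑ j, c j * t j ^ (m + r - (i + k : ℕ))) * v k
      = ∑ j, c j * t j ^ (m - i : ℕ) * ∑ k, v k * t j ^ (r - k : ℕ) := by
        simp_rw [Finset.sum_mul, Finset.mul_sum]
        rw [Finset.sum_comm]
        refine Finset.sum_congr rfl fun j _ => Finset.sum_congr rfl fun k _ => ?_
        rw [show m + r - (i + k : ℕ) = (m - i) + (r - k) by omega]
        ring
    _ = 0 := by simp only [ht, mul_zero, Finset.sum_const_zero]

/-- As `v 0 ≠ 0`, the recurrence encoded by `v` determines each term from the `r` terms after it. -/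
theorem eq_zero_of_hankel_mulVec_eq_zero {R : Type*} [Semiring R] [NoZeroDivisors R] {m r : ℕ}
    {s : ℕ → R} {v : Fin (r + 1) → R} (hv₀ : v 0 ≠ 0) (hv : hankel s (m + 1) (r + 1) *ᵥ v = 0)
    (hs : ∀ i, m < i → i ≤ m + r → s i = 0) :
    ∀ i ≤ m + r, s i = 0 := by
  intro i
  induction i using Nat.strong_decreasing_induction with
  | base => exact ⟨m + r, fun i hi hi' => absurd hi' hi.not_ge⟩
  | step i ih =>
    intro hi
    obtain him | him := lt_or_ge m i
    · exact hs i him hi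
    have recurrence : ∑ k : Fin (r + 1), s (i + k) * v k = 0 := congrFun hv ⟨i, by omega⟩
    have later_terms (k : Fin r) : s (i + k.succ) = 0 :=
      ih _ (by simp) (by simp only [Fin.val_succ]; omega)
    simpa [Fin.sum_univ_succ, later_terms, hv₀, -Fin.val_succ] using recurrence

theorem exists_sum_mul_pow_eq {K : Type*} [Field K] {r : ℕ} {t : Fin r → K}
    (ht : Function.Injective t) (s : Fin r → K) :
    ∃ c : Fin r → K, ∀ i : Fin r, ∑ j, c j * t j ^ (i : ℕ) = s i := by
  have isUnit_vandermonde : IsUnit (Matrix.vandermonde t) :=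
    (Matrix.isUnit_iff_isUnit_det _).2 (Matrix.det_vandermonde_ne_zero_iff.2 ht).isUnit
  obtain ⟨c, hc⟩ := Matrix.vecMul_surjective_iff_isUnit.2 isUnit_vandermonde s
  exact ⟨c, congrFun hc⟩

theorem exists_eq_sum_mul_pow_of_hankel_mulVec_eq_zero {K : Type*} [Field K] {m r : ℕ} {s : ℕ → K}
    {v : Fin (r + 1) → K} (hv₀ : v 0 ≠ 0) (hv : hankel s (m + 1) (r + 1) *ᵥ v = 0)
    {t : Fin r → K} (ht : Function.Injective t) (hroot : ∀ j, ∑ k, v k * t j ^ (r - k : ℕ) = 0) :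
    ∃ c : Fin r → K, ∀ i ≤ m + r, s i = ∑ j, c j * t j ^ (m + r - i) := by
  obtain ⟨c, hc⟩ := exists_sum_mul_pow_eq ht fun i => s (m + r - i)
  refine ⟨c, fun i hi => sub_eq_zero.1 ?_⟩
  refine eq_zero_of_hankel_mulVec_eq_zero
    (s := fun i => s i - ∑ j, c j * t j ^ (m + r - i)) hv₀ ?_ (fun i him hi => ?_) i hi
  · calc _ = (hankel s (m + 1) (r + 1) -
            hankel (fun i => ∑ j, c j * t j ^ (m + r - i)) (m + 1) (r + 1)) *ᵥ v := rfl
      _ = 0 := by rw [Matrix.sub_mulVec, hv, hankel_sum_mul_pow_mulVec_eq_zero hroot, sub_zero]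
  · have interpolation := hc ⟨m + r - i, by omega⟩
    simp only [Nat.sub_sub_self hi] at interpolation
    rw [interpolation, sub_self]

end Hankel

section SignedMinors

variable {R : Type*} [CommRing R] {n : ℕ}

/-- The maximal minors of an `n × (n + 1)` matrix with alternating signs: the `k`-th entry is
`(-1) ^ k` times the minor that omits column `k`. -/
def signedMinors (A : Matrix (Fin n) (Fin (n + 1)) R) (k : Fin (n + 1)) : R :=
  (-1) ^ (k : ℕ) * (A.submatrix id k.succAbove).det

/-- Pairing the minors with row `i` expands a determinant in which that row occurs twice. -/
theorem mulVec_signedMinors (A : Matrix (Fin n) (Fin (n + 1)) R) : A *ᵥ signedMinors A = 0 := by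
  ext i
  let B : Matrix (Fin (n + 1)) (Fin (n + 1)) R := Matrix.of (Fin.cons (A i) A)
  calc ∑ k, A i k * signedMinors A k = B.det := by
        rw [Matrix.det_succ_row_zero]
        refine Finset.sum_congr rfl fun k _ => ?_
        rw [signedMinors, ← mul_assoc, mul_comm (A i k)]
        rfl
    _ = 0 := Matrix.det_zero_of_row_eq (Fin.succ_ne_zero i).symm rfl

theorem le_rank_of_signedMinors_ne_zero {K : Type*} [Field K] {A : Matrix (Fin n) (Fin (n + 1)) K}
    {k : Fin (n + 1)} (hk : signedMinors A k ≠ 0) : n ≤ A.rank := by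
  have isUnit_minor : IsUnit (A.submatrix id k.succAbove) :=
    (Matrix.isUnit_iff_isUnit_det _).2 (right_ne_zero_of_mul hk).isUnit
  calc n = (A.submatrix id k.succAbove).rank := by
        rw [Matrix.rank_of_isUnit _ isUnit_minor, Fintype.card_fin]
    _ ≤ A.rank := Matrix.rank_submatrix_le A id k.succAbove

end SignedMinors

section BinaryForm

/-- The binary form of degree `d` with coefficients `s 0, …, s d` in the basis of monomials scaled
by binomial coefficients. Coefficients are a sequence on `ℕ`, of which only this initial segment
matters, so that the entries of Hankel matrices need no bound on their index. -/
def binaryForm {R : Type*} [CommSemiring R] (d : ℕ) (s : ℕ → R) : MvPolynomial (Fin 2) R :=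
  ∑ i ∈ Finset.range (d + 1), C (d.choose i * s i) * X 0 ^ (d - i) * X 1 ^ i

theorem binaryForm_inj {R : Type*} [CommSemiring R] [IsCancelMulZero R] [CharZero R] {d : ℕ}
    {s s' : ℕ → R} :
    binaryForm d s = binaryForm d s' ↔ ∀ i ≤ d, s i = s' i := by
  refine ⟨fun h i hi => ?_, fun h => Finset.sum_congr rfl fun i hi => ?_⟩
  · have dehomogenize (u : ℕ → R) :
        (aeval ![1, Polynomial.X] (binaryForm d u)).coeff i = d.choose i * u i := by
      simp [binaryForm, Polynomial.coeff_X_pow, mul_assoc, Nat.lt_succ_of_le hi]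
    have choose_ne_zero : (d.choose i : R) ≠ 0 := mod_cast (Nat.choose_pos hi).ne'
    apply mul_left_cancel₀ choose_ne_zero
    rw [← dehomogenize, ← dehomogenize, h]
  · rw [h i (Finset.mem_range_succ_iff.1 hi)]

theorem sum_C_mul_lin_pow {r : ℕ} (d : ℕ) (c a b : Fin r → ℝ) :
    ∑ j, C (c j) * lin (a j) (b j) ^ d =
      binaryForm d fun i => ∑ j, c j * (a j ^ (d - i) * b j ^ i) := by
  have expand (j : Fin r) : C (c j) * lin (a j) (b j) ^ d =
      ∑ i ∈ Finset.range (d + 1),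
        C (d.choose i * (c j * (a j ^ (d - i) * b j ^ i))) * X 0 ^ (d - i) * X 1 ^ i := by
    rw [lin, add_comm, add_pow, Finset.mul_sum]
    refine Finset.sum_congr rfl fun i _ => ?_
    simp only [map_mul, map_pow, map_natCast]
    ring
  simp only [expand, binaryForm, Finset.mul_sum, map_sum, Finset.sum_mul]
  exact Finset.sum_comm

theorem hasDecomp_binaryForm_iff {d r : ℕ} {s : ℕ → ℝ} :
    HasDecomp (binaryForm d s) d r ↔ ∃ c a b : Fin r → ℝ, (∀ j, (a j, b j) ≠ (0, 0)) ∧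
      ∀ i ≤ d, s i = ∑ j, c j * (a j ^ (d - i) * b j ^ i) := by
  simp only [HasDecomp, sum_C_mul_lin_pow, binaryForm_inj]

theorem rank_hankel_le_of_hasDecomp {m n r : ℕ} {s : ℕ → ℝ}
    (h : HasDecomp (binaryForm (m + n) s) (m + n) r) : (hankel s (m + 1) (n + 1)).rank ≤ r := by
  obtain ⟨c, a, b, -, hs⟩ := hasDecomp_binaryForm_iff.1 h
  have same_hankel : hankel s (m + 1) (n + 1) =
      hankel (fun i => ∑ j, c j * (a j ^ (m + n - i) * b j ^ i)) (m + 1) (n + 1) :=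
    Matrix.ext fun i k => hs (i + k) (by omega)
  rw [same_hankel]
  exact rank_hankel_sum_mul_pow_le m n c a b

theorem hasDecomp_of_hankel_mulVec_eq_zero {m r : ℕ} {s : ℕ → ℝ} {v : Fin (r + 1) → ℝ}
    (hv₀ : v 0 ≠ 0) (hv : hankel s (m + 1) (r + 1) *ᵥ v = 0) {t : Fin r → ℝ}
    (ht : Function.Injective t) (hroot : ∀ j, ∑ k, v k * t j ^ (r - k : ℕ) = 0) :
    HasDecomp (binaryForm (m + r) s) (m + r) r := by
  obtain ⟨c, hc⟩ := exists_eq_sum_mul_pow_of_hankel_mulVec_eq_zero hv₀ hv ht hroot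
  exact hasDecomp_binaryForm_iff.2 ⟨c, t, fun _ => 1, by simp, by simpa using hc⟩

theorem realRank_binaryForm_eq_of_hankel_mulVec_eq_zero {m r : ℕ} {s : ℕ → ℝ}
    (hrank : r ≤ (hankel s (m + 1) (r + 1)).rank)
    {v : Fin (r + 1) → ℝ} (hv₀ : v 0 ≠ 0) (hv : hankel s (m + 1) (r + 1) *ᵥ v = 0) {t : Fin r → ℝ}
    (ht : Function.Injective t) (hroot : ∀ j, ∑ k, v k * t j ^ (r - k : ℕ) = 0) :
    realRank (binaryForm (m + r) s) (m + r) = r := by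
  have decomp := hasDecomp_of_hankel_mulVec_eq_zero hv₀ hv ht hroot
  exact le_antisymm (Nat.sInf_le decomp) <| le_csInf ⟨r, decomp⟩ fun _ h =>
    hrank.trans (rank_hankel_le_of_hasDecomp h)

theorem realRank_binaryForm_eq_of_signedMinors {n : ℕ} {s : ℕ → ℝ}
    (h₀ : signedMinors (hankel s (n + 1) (n + 2)) 0 ≠ 0) {t : Fin (n + 1) → ℝ}
    (ht : Function.Injective t)
    (hroot : ∀ j, ∑ k, signedMinors (hankel s (n + 1) (n + 2)) k * t j ^ (n + 1 - k : ℕ) = 0) :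
    realRank (binaryForm (n + (n + 1)) s) (n + (n + 1)) = n + 1 :=
  realRank_binaryForm_eq_of_hankel_mulVec_eq_zero (le_rank_of_signedMinors_ne_zero h₀) h₀
    (mulVec_signedMinors _) ht hroot

end BinaryForm

section Quintic

variable (α₀ α₁ α₂ α₃ α₄ α₅ : ℝ)

/-- The coefficient sequence of a binary quintic as an argument for `binaryForm` and `hankel`,
continued by zeros. -/
def quinticCoeff (i : ℕ) : ℝ := [α₀, α₁, α₂, α₃, α₄, α₅].getD i 0

theorem binaryForm_quinticCoeff :
    binaryForm 5 (quinticCoeff α₀ α₁ α₂ α₃ α₄ α₅) =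
      C α₀ * X 0 ^ 5 + C (5 * α₁) * X 0 ^ 4 * X 1 +
      C (10 * α₂) * X 0 ^ 3 * X 1 ^ 2 + C (10 * α₃) * X 0 ^ 2 * X 1 ^ 3 +
      C (5 * α₄) * X 0 * X 1 ^ 4 + C α₅ * X 1 ^ 5 := by
  simp [binaryForm, quinticCoeff, Finset.sum_range_succ, Nat.choose, -C_mul, -map_mul]

theorem signedMinors_hankel_quinticCoeff :
    signedMinors (hankel (quinticCoeff α₀ α₁ α₂ α₃ α₄ α₅) 3 4) =
      ![(!![α₁, α₂, α₃; α₂, α₃, α₄; α₃, α₄, α₅]).det,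
        -(!![α₀, α₂, α₃; α₁, α₃, α₄; α₂, α₄, α₅]).det,
        (!![α₀, α₁, α₃; α₁, α₂, α₄; α₂, α₃, α₅]).det,
        -(!![α₀, α₁, α₂; α₁, α₂, α₃; α₂, α₃, α₄]).det] := by
  ext k
  fin_cases k <;>
    simp [signedMinors, hankel, quinticCoeff, Matrix.det_fin_three, Fin.succAbove, pow_succ]

end Quintic

theorem stmt18_general (α₀ α₁ α₂ α₃ α₄ α₅ : ℝ) (f : MvPolynomial (Fin 2) ℝ)
    (hf : f = C α₀ * X 0 ^ 5 + C (5 * α₁) * X 0 ^ 4 * X 1 +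
      C (10 * α₂) * X 0 ^ 3 * X 1 ^ 2 + C (10 * α₃) * X 0 ^ 2 * X 1 ^ 3 +
      C (5 * α₄) * X 0 * X 1 ^ 4 + C α₅ * X 1 ^ 5)
    (g : Polynomial ℝ)
    (hg : g = Polynomial.C (!![α₁, α₂, α₃; α₂, α₃, α₄; α₃, α₄, α₅]).det * Polynomial.X ^ 3
      - Polynomial.C (!![α₀, α₂, α₃; α₁, α₃, α₄; α₂, α₄, α₅]).det * Polynomial.X ^ 2
      + Polynomial.C (!![α₀, α₁, α₃; α₁, α₂, α₄; α₂, α₃, α₅]).det * Polynomial.X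
      - Polynomial.C (!![α₀, α₁, α₂; α₁, α₂, α₃; α₂, α₃, α₄]).det)
    (hdeg : g.degree = 3)
    (t₁ t₂ t₃ : ℝ) (h12 : t₁ ≠ t₂) (h13 : t₁ ≠ t₃) (h23 : t₂ ≠ t₃)
    (hr1 : g.IsRoot t₁) (hr2 : g.IsRoot t₂) (hr3 : g.IsRoot t₃) :
    realRank f 5 = 3 := by
  rw [hf, ← binaryForm_quinticCoeff]
  have minors := signedMinors_hankel_quinticCoeff α₀ α₁ α₂ α₃ α₄ α₅
  have leading_coeff :
      signedMinors (hankel (quinticCoeff α₀ α₁ α₂ α₃ α₄ α₅) 3 4) 0 = g.coeff 3 := by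
    simp [minors, hg]
  have root_sum {t : ℝ} (ht : g.IsRoot t) :
      ∑ k, signedMinors (hankel (quinticCoeff α₀ α₁ α₂ α₃ α₄ α₅) 3 4) k * t ^ (3 - k : ℕ) = 0 := by
    rw [← ht, hg]
    simp [minors, Fin.sum_univ_four, sub_eq_add_neg]
  have injective : Function.Injective ![t₁, t₂, t₃] := by
    simp [Function.Injective, Fin.forall_fin_succ, h12, h13, h23, h12.symm, h13.symm, h23.symm]
  refine realRank_binaryForm_eq_of_signedMinors (n := 2) ?_ injective fun j => ?_
  · rw [leading_coeff]
    exact Polynomial.coeff_ne_zero_of_eq_degree hdeg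
  · fin_cases j
    exacts [root_sum hr1, root_sum hr2, root_sum hr3]

/-- rank-3 criterion for quintics. If the Hankel matrix of `f` has
rank 3 and the cubic `g` of `3×3` minors has three distinct real roots (as a
polynomial of degree 3), then the real rank of `f` is 3. -/
theorem stmt18 (α₀ α₁ α₂ α₃ α₄ α₅ : ℝ) (f : MvPolynomial (Fin 2) ℝ)
    (hf : f = C α₀ * X 0 ^ 5 + C (5 * α₁) * X 0 ^ 4 * X 1 +
      C (10 * α₂) * X 0 ^ 3 * X 1 ^ 2 + C (10 * α₃) * X 0 ^ 2 * X 1 ^ 3 +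
      C (5 * α₄) * X 0 * X 1 ^ 4 + C α₅ * X 1 ^ 5)
    (hsf : SquarefreeC f)
    (hrk : (!![α₀, α₁, α₂, α₃; α₁, α₂, α₃, α₄; α₂, α₃, α₄, α₅]).rank = 3)
    (g : Polynomial ℝ)
    (hg : g = Polynomial.C (!![α₁, α₂, α₃; α₂, α₃, α₄; α₃, α₄, α₅]).det * Polynomial.X ^ 3
      - Polynomial.C (!![α₀, α₂, α₃; α₁, α₃, α₄; α₂, α₄, α₅]).det * Polynomial.X ^ 2
      + Polynomial.C (!![α₀, α₁, α₃; α₁, α₂, α₄; α₂, α₃, α₅]).det * Polynomial.X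
      - Polynomial.C (!![α₀, α₁, α₂; α₁, α₂, α₃; α₂, α₃, α₄]).det)
    (hdeg : g.degree = 3)
    (t₁ t₂ t₃ : ℝ) (h12 : t₁ ≠ t₂) (h13 : t₁ ≠ t₃) (h23 : t₂ ≠ t₃)
    (hr1 : g.IsRoot t₁) (hr2 : g.IsRoot t₂) (hr3 : g.IsRoot t₃) :
    realRank f 5 = 3 :=
  stmt18_general α₀ α₁ α₂ α₃ α₄ α₅ f hf g hg hdeg t₁ t₂ t₃ h12 h13 h23 hr1 hr2 hr3
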